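/- There exist constants C ≥ c > 0 such that for every x ∈ a, c · Π(x) e^{−(ρ, x⁺)} ≤ G_0(x) ≤ C · Π(x) e^{−(ρ, x⁺)}, where Π(x) = Π_{α∈R₀⁺, (α,x) ≥ 0} (1 + (α,x)) and x⁺ is the unique point of the Weyl orbit W·x lying in ā₊. -/

import Mathlib

open scoped BigOperators RealInnerProductSpace Classical

noncomputable section

variable {E : Type*} [NormedAddCommGroup E] [InnerProductSpace ℝ E] [FiniteDimensional ℝ E]

/-- The coroot `α∨ = 2α/|α|²`. -/
def coroot (α : E) : E := (2 / ⟪α, α⟫) • α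

/-- The orthogonal reflection `r_α x = x - (α∨, x) α`. -/
def rRefl (α : E) (x : E) : E := x - ⟪coroot α, x⟫ • α

/-- Data of an integral root system with positive subsystem and
a Weyl-invariant positive multiplicity function. -/
structure HOData (E : Type*) [NormedAddCommGroup E] [InnerProductSpace ℝ E] : Type _ where
  R : Finset E
  Rpos : Finset E
  k : E → ℝ
  k_pos : ∀ α ∈ R, 0 < k α
  root_ne_zero : ∀ α ∈ R, α ≠ 0
  pos_subset : Rpos ⊆ R
  pos_char : ∃ u : E, ∀ α ∈ R, (α ∈ Rpos ↔ 0 < ⟪α, u⟫)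
  pos_or_neg : ∀ α ∈ R, α ∈ Rpos ∨ -α ∈ Rpos
  neg_mem : ∀ α ∈ R, -α ∈ R
  integral : ∀ α ∈ R, ∀ β ∈ R, ∃ n : ℤ, ⟪coroot α, β⟫ = (n : ℝ)
  refl_mem : ∀ α ∈ R, ∀ β ∈ R, rRefl α β ∈ R
  k_inv : ∀ α ∈ R, ∀ β ∈ R, k (rRefl α β) = k β

/-- The Weyl group: the subgroup of linear isometries generated by the root reflections. -/
def weylGroup (D : HOData E) : Subgroup (E ≃ₗᵢ[ℝ] E) :=
  Subgroup.closure {w : E ≃ₗᵢ[ℝ] E | ∃ α ∈ D.R, ∀ x, w x = rRefl α x}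

/-- `ρ = (1/2) Σ_{α ∈ R⁺} k_α α`. -/
def rhoHO (D : HOData E) : E := (2:ℝ)⁻¹ • ∑ α ∈ D.Rpos, D.k α • α

/-- Regular points. -/
def HORegular (D : HOData E) (x : E) : Prop := ∀ α ∈ D.R, ⟪α, x⟫ ≠ 0

/-- The (open) positive Weyl chamber. -/
def posChamber (D : HOData E) : Set E := {x | ∀ α ∈ D.Rpos, 0 < ⟪α, x⟫}

/-- The positive indivisible roots `R₀⁺`. -/
def Rpos0 (D : HOData E) : Finset E := D.Rpos.filter (fun α => (2:ℝ)⁻¹ • α ∉ D.R)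

/-- The Opdam function `G_λ` for a real parameter `λ`: an analytic function,
normalized at `0`, satisfying the Cherednik differential-difference system. -/
def IsOpdamR (D : HOData E) (lam : E) (G : E → ℝ) : Prop :=
  AnalyticOnNhd ℝ G Set.univ ∧ G 0 = 1 ∧
  ∀ ξ x, HORegular D x →
    fderiv ℝ G x ξ =
      (∑ α ∈ D.Rpos, D.k α * ⟪α, ξ⟫ / (1 - Real.exp (-⟪α, x⟫)) * (G (rRefl α x) - G x))
      + ⟪rhoHO D + lam, ξ⟫ * G x

/-- The Opdam function `G_λ` for a complex parameter `λ = l1 + i l2 ∈ h`. -/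
def IsOpdamC (D : HOData E) (l1 l2 : E) (G : E → ℂ) : Prop :=
  AnalyticOnNhd ℝ G Set.univ ∧ G 0 = 1 ∧
  ∀ ξ x, HORegular D x →
    fderiv ℝ G x ξ =
      (∑ α ∈ D.Rpos, ((D.k α * ⟪α, ξ⟫ / (1 - Real.exp (-⟪α, x⟫)) : ℝ) : ℂ)
          * (G (rRefl α x) - G x))
      + (((⟪rhoHO D + l1, ξ⟫ : ℝ) : ℂ) + Complex.I * ((⟪l2, ξ⟫ : ℝ) : ℂ)) * G x

/-- The symmetrization `F(x) = |W|⁻¹ Σ_{w ∈ W} G(w x)` (real valued case). -/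
def Fsym (D : HOData E) [Fintype (weylGroup D)] (G : E → ℝ) (x : E) : ℝ :=
  (Fintype.card (weylGroup D) : ℝ)⁻¹ * ∑ w : weylGroup D, G (w.1 x)

/-- The symmetrization `F(x) = |W|⁻¹ Σ_{w ∈ W} G(w x)` (complex valued case). -/
def FsymC (D : HOData E) [Fintype (weylGroup D)] (G : E → ℂ) (x : E) : ℂ :=
  (Fintype.card (weylGroup D) : ℂ)⁻¹ * ∑ w : weylGroup D, G (w.1 x)

/-- `max_{w ∈ W} (w λ, x)`. -/
def maxW (D : HOData E) [Fintype (weylGroup D)] (lam x : E) : ℝ :=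
  ⨆ w : weylGroup D, ⟪w.1 lam, x⟫

/-!
Take `ξ = x` in the equations. They then become an ordinary differential equation along each ray,
coupling the values on a Weyl orbit; values at reflected points enter with nonnegative
coefficients. Such a cooperative system satisfies a comparison principle: a subsolution below a
supersolution at the origin stays below it.

Comparison functions are `exp (B δ(x) - (ρ, x⁺)) ∏ (1 + A (α, x)⁺)`, the product running over
`R₀⁺`. Here `δ` is a bounded Weyl invariant correction absorbing the exponentially decaying part of
the coefficients, so that only the linearly growing part remains. The reflection `r_α` costs the
product at least its factor at `α`, hence a large `A` gives a supersolution. When `α` is simple, it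
costs precisely that factor; since every positive root is a nonnegative combination of simple
roots, a small `A` gives a subsolution. Up to constants, all these functions agree with the one in
the theorem.
-/

open scoped NNReal

section Ramp

/-- The factor `1 + A s⁺` which a root of height `s` contributes to the polynomial part of the
barriers. -/
def ramp (A s : ℝ) : ℝ := 1 + A * max s 0

/-- The function `s⁺ / (1 + A s⁺)`; `A` times it is the logarithmic derivative of
`t ↦ ramp A (t * s)` at `t = 1`. -/
def saturation (A s : ℝ) : ℝ := max s 0 / ramp A s

variable {A s t : ℝ}

lemma ramp_of_nonneg (hs : 0 ≤ s) : ramp A s = 1 + A * s := by rw [ramp, max_eq_left hs]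

lemma ramp_of_nonpos (hs : s ≤ 0) : ramp A s = 1 := by
  rw [ramp, max_eq_right hs, mul_zero, add_zero]

lemma saturation_of_nonpos (hs : s ≤ 0) : saturation A s = 0 := by
  rw [saturation, max_eq_right hs, zero_div]

lemma ramp_zero_right (A : ℝ) : ramp A 0 = 1 := ramp_of_nonpos le_rfl

lemma continuous_ramp (A : ℝ) : Continuous (ramp A) := by unfold ramp; fun_prop

lemma one_le_ramp (hA : 0 ≤ A) (s : ℝ) : 1 ≤ ramp A s :=
  le_add_of_nonneg_right (mul_nonneg hA (le_max_right s 0))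

lemma ramp_pos (hA : 0 ≤ A) (s : ℝ) : 0 < ramp A s := one_pos.trans_le (one_le_ramp hA s)

lemma monotone_ramp (hA : 0 ≤ A) : Monotone (ramp A) := fun s t hst => by
  unfold ramp
  gcongr

lemma ramp_add_le (hA : 0 ≤ A) (s t : ℝ) : ramp A (s + t) ≤ (1 + A * |t|) * ramp A s := by
  have hmax : max (s + t) 0 ≤ max s 0 + |t| :=
    max_le (add_le_add (le_max_left s 0) (le_abs_self t)) (by positivity)
  have hcross : 0 ≤ (A * |t|) * (A * max s 0) := by positivity
  have := mul_le_mul_of_nonneg_left hmax hA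
  unfold ramp
  linarith

lemma ramp_le_max_mul_ramp {A' : ℝ} (hA' : 0 < A') (s : ℝ) :
    ramp A s ≤ max 1 (A / A') * ramp A' s := by
  have hslope : A ≤ max 1 (A / A') * A' := (div_le_iff₀ hA').1 (le_max_right 1 _)
  have := mul_le_mul_of_nonneg_right hslope (le_max_right s 0)
  unfold ramp
  linarith [le_max_left 1 (A / A')]

lemma saturation_nonneg (hA : 0 ≤ A) (s : ℝ) : 0 ≤ saturation A s :=
  div_nonneg (le_max_right s 0) (ramp_pos hA s).le

lemma saturation_mul_ramp (hA : 0 ≤ A) (s : ℝ) : saturation A s * ramp A s = max s 0 :=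
  div_mul_cancel₀ _ (ramp_pos hA s).ne'

lemma saturation_add_le (hA : 0 ≤ A) (s t : ℝ) :
    saturation A (s + t) ≤ saturation A s + saturation A t := by
  have hs := le_max_right s 0
  have ht := le_max_right t 0
  have hst : max (s + t) 0 ≤ max s 0 + max t 0 :=
    max_le (add_le_add (le_max_left s 0) (le_max_left t 0)) (add_nonneg hs ht)
  unfold saturation ramp
  generalize max s 0 = p at *
  generalize max t 0 = q at *
  calc max (s + t) 0 / (1 + A * max (s + t) 0)
      ≤ (p + q) / (1 + A * (p + q)) := by
        rw [div_le_div_iff₀ (by positivity) (by positivity)]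
        linarith
    _ = p / (1 + A * (p + q)) + q / (1 + A * (p + q)) := add_div _ _ _
    _ ≤ p / (1 + A * p) + q / (1 + A * q) := by gcongr <;> linarith

lemma saturation_mul_le (hA : 0 ≤ A) {c : ℝ} (hc : 0 ≤ c) (s : ℝ) :
    saturation A (c * s) ≤ (1 + c) * saturation A s := by
  have hmax : max (c * s) 0 = c * max s 0 := by
    rw [← mul_zero c, ← mul_max_of_nonneg _ _ hc, mul_zero]
  have hs := le_max_right s 0
  rw [saturation, saturation, ramp, ramp, hmax, mul_div_assoc',
    div_le_div_iff₀ (by positivity) (by positivity)]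
  generalize max s 0 = p at *
  have : 0 ≤ A * p * c ^ 2 * p := by positivity
  nlinarith

end Ramp

section BernoulliQuotient

/-- The function `τ / (exp τ - 1)`, with junk value `0` at `τ = 0`. -/
def bernoulliQuotient (τ : ℝ) : ℝ := τ / (Real.exp τ - 1)

lemma bernoulliQuotient_nonneg {τ : ℝ} (hτ : 0 ≤ τ) : 0 ≤ bernoulliQuotient τ :=
  div_nonneg hτ (sub_nonneg.2 (Real.one_le_exp hτ))

lemma bernoulliQuotient_le_one {τ : ℝ} (hτ : 0 ≤ τ) : bernoulliQuotient τ ≤ 1 :=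
  div_le_one_of_le₀ (by linarith [Real.add_one_le_exp τ]) (sub_nonneg.2 (Real.one_le_exp hτ))

lemma div_one_sub_exp_neg (a : ℝ) :
    a / (1 - Real.exp (-a)) = bernoulliQuotient |a| + max a 0 := by
  rcases lt_trichotomy a 0 with ha | rfl | ha
  · rw [abs_of_neg ha, max_eq_right ha.le, add_zero, bernoulliQuotient, ← neg_div_neg_eq, neg_sub]
  · simp [bernoulliQuotient]
  · have hexp : Real.exp a - 1 ≠ 0 := (sub_pos.2 (Real.one_lt_exp_iff.2 ha)).ne'
    rw [abs_of_pos ha, max_eq_left ha.le, bernoulliQuotient, Real.exp_neg]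
    have : 1 - (Real.exp a)⁻¹ = (Real.exp a - 1) / Real.exp a := by field_simp
    rw [this]
    field_simp
    ring

lemma pow_le_factorial_mul_exp_sub_one {τ : ℝ} (hτ : 0 ≤ τ) {n : ℕ} (hn : n ≠ 0) :
    τ ^ n ≤ n.factorial * (Real.exp τ - 1) := by
  have hterms : ∑ i ∈ {0, n}, τ ^ i / i.factorial ≤
      ∑ i ∈ Finset.range (n + 1), τ ^ i / i.factorial :=
    Finset.sum_le_sum_of_subset_of_nonneg (by grind) fun i _ _ => by positivity
  rw [Finset.sum_pair hn.symm, pow_zero, Nat.factorial_zero, Nat.cast_one, div_one] at hterms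
  rw [← div_le_iff₀' (by positivity)]
  linarith [Real.sum_le_exp_of_nonneg hτ (n + 1)]

lemma exists_eval_le_mul_exp_sub_one {P : Polynomial ℝ} (hP : P.coeff 0 = 0) :
    ∃ K : ℝ, 0 ≤ K ∧ ∀ τ : ℝ, 0 ≤ τ → P.eval τ ≤ K * (Real.exp τ - 1) := by
  refine ⟨∑ n ∈ P.support, |P.coeff n| * n.factorial, by positivity, fun τ hτ => ?_⟩
  rw [Polynomial.eval_eq_sum, Polynomial.sum, Finset.sum_mul]
  refine Finset.sum_le_sum fun n hn => ?_
  have hn0 : n ≠ 0 := by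
    rintro rfl
    exact Polynomial.mem_support_iff.1 hn hP
  rw [mul_assoc]
  gcongr
  · exact le_abs_self _
  · exact pow_le_factorial_mul_exp_sub_one hτ hn0

lemma exists_bernoulliQuotient_mul_le (c : ℝ) (m : ℕ) :
    ∃ K : ℝ, 0 ≤ K ∧ ∀ τ : ℝ, 0 ≤ τ →
      bernoulliQuotient τ * ((1 + c * τ) ^ m - 1) ≤ K * (τ / (1 + τ) ^ 2) := by
  obtain ⟨K, hK, hbound⟩ := exists_eval_le_mul_exp_sub_one
    (P := ((1 + .C c * .X) ^ m - 1) * (1 + .X) ^ 2) (by simp [Polynomial.coeff_zero_eq_eval_zero])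
  refine ⟨K, hK, fun τ hτ => ?_⟩
  rcases hτ.eq_or_lt with rfl | hpos
  · simp
  · have hexp : 0 < Real.exp τ - 1 := sub_pos.2 (Real.one_lt_exp_iff.2 hpos)
    have := hbound τ hτ
    simp only [Polynomial.eval_mul, Polynomial.eval_sub, Polynomial.eval_pow, Polynomial.eval_add,
      Polynomial.eval_one, Polynomial.eval_C, Polynomial.eval_X] at this
    rw [bernoulliQuotient, div_mul_eq_mul_div, mul_div_assoc',
      div_le_div_iff₀ hexp (by positivity)]
    nlinarith

end BernoulliQuotient

section Cooperative

lemma pos_of_neg_mul_le_deriv {f f' : ℝ → ℝ} {a b M : ℝ} (hab : a ≤ b)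
    (hf : ContinuousOn f (Set.Icc a b)) (hf' : ∀ t ∈ Set.Ioo a b, HasDerivAt f (f' t) t)
    (hle : ∀ t ∈ Set.Ioo a b, -(M * f t) ≤ f' t) (ha : 0 < f a) : 0 < f b := by
  have hderiv : ∀ t ∈ interior (Set.Icc a b), HasDerivWithinAt (fun t => Real.exp (M * t) * f t)
      (Real.exp (M * t) * (M * f t + f' t)) (interior (Set.Icc a b)) t := fun t ht => by
    rw [interior_Icc] at ht
    refine (((((hasDerivAt_id' t).const_mul M).exp).mul (hf' t ht)).congr_deriv ?_).hasDerivWithinAt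
    ring
  have hmono : MonotoneOn (fun t => Real.exp (M * t) * f t) (Set.Icc a b) := by
    refine monotoneOn_of_hasDerivWithinAt_nonneg (convex_Icc a b) (by fun_prop) hderiv
      fun t ht => ?_
    rw [interior_Icc] at ht
    exact mul_nonneg (Real.exp_pos _).le (by linarith [hle t ht])
  have hpos : 0 < Real.exp (M * b) * f b :=
    (by positivity : 0 < Real.exp (M * a) * f a).trans_le
      (hmono (Set.left_mem_Icc.2 hab) (Set.right_mem_Icc.2 hab) hab)
  exact pos_of_mul_pos_right hpos (Real.exp_pos _).le

variable {ι : Type*} [Finite ι] {d : ι → ℝ → ℝ}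

lemma exists_first_nonpos (hd : ∀ i, Continuous (d i)) (h0 : ∀ i, 0 < d i 0) {i : ι} {t : ℝ}
    (ht : 0 ≤ t) (hi : d i t ≤ 0) :
    ∃ t₀ > 0, (∀ s ∈ Set.Ico 0 t₀, ∀ j, 0 < d j s) ∧ ∃ j, d j t₀ ≤ 0 := by
  have hclosed : IsClosed {s | 0 ≤ s ∧ ∃ j, d j s ≤ 0} := by
    simp only [Set.ofPred_and, Set.ofPred_exists]
    exact isClosed_Ici.inter
      (isClosed_iUnion_of_finite fun j => isClosed_le (hd j) continuous_const)
  obtain ⟨⟨ht₀, j, hj⟩, hleast⟩ := hclosed.isLeast_csInf ⟨t, ht, i, hi⟩ ⟨0, fun s hs => hs.1⟩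
  refine ⟨_, ht₀.lt_of_ne fun h => ?_, fun s hs l => ?_, j, hj⟩
  · rw [← h] at hj
    exact hj.not_gt (h0 j)
  · by_contra! hl
    exact (hleast ⟨hs.1, l, hl⟩).not_gt hs.2

/-- Off-diagonal nonnegativity is encoded by requiring the differential inequality only at times
when all components are nonnegative. -/
lemma pos_of_cooperative {d' c : ι → ℝ → ℝ} (hd : ∀ i, Continuous (d i)) (h0 : ∀ i, 0 < d i 0)
    (hd' : ∀ i, ∀ t, 0 < t → HasDerivAt (d i) (d' i t) t)
    (hc : ∀ i, ContinuousOn (c i) (Set.Ioi 0))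
    (hle : ∀ t, 0 < t → (∀ i, 0 ≤ d i t) → ∀ i, -(c i t * d i t) ≤ d' i t)
    (i : ι) {t : ℝ} (ht : 0 ≤ t) : 0 < d i t := by
  by_contra! hi
  obtain ⟨t₀, ht₀, hpos, j, hj⟩ := exists_first_nonpos hd h0 ht hi
  have hhalf : 0 < t₀ / 2 := half_pos ht₀
  obtain ⟨M, hM⟩ := isCompact_Icc.bddAbove_image
    ((hc j).mono fun s (hs : s ∈ Set.Icc (t₀ / 2) t₀) => hhalf.trans_le hs.1)
  refine hj.not_gt (pos_of_neg_mul_le_deriv (f := d j) (half_le_self ht₀.le) (M := M)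
    (hd j).continuousOn (fun s hs => hd' j s (hhalf.trans hs.1)) (fun s hs => ?_)
    (hpos _ ⟨hhalf.le, half_lt_self ht₀⟩ j))
  have hs0 : 0 < s := hhalf.trans hs.1
  have hds : ∀ l, 0 < d l s := hpos s ⟨hs0.le, hs.2⟩
  have hMs : c j s ≤ M := hM ⟨s, Set.Ioo_subset_Icc_self hs, rfl⟩
  have := hle s hs0 (fun l => (hds l).le) j
  have := mul_le_mul_of_nonneg_right hMs (hds j).le
  linarith

end Cooperative

section RadialDerivative

/-- Euler's operator `x·∇`: `F'` is the derivative of `t ↦ F (t • x)` at `t = 1`. -/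
def HasRadialDerivAt {V : Type*} [AddCommGroup V] [Module ℝ V] (F : V → ℝ) (F' : ℝ) (x : V) :
    Prop :=
  HasDerivAt (fun t : ℝ => F (t • x)) F' 1

section Module

variable {V : Type*} [AddCommGroup V] [Module ℝ V] {F : V → ℝ} {F' : ℝ} {x : V}

lemma hasRadialDerivAt_of_homogeneous (hF : ∀ t : ℝ, 0 < t → F (t • x) = t * F x) :
    HasRadialDerivAt F (F x) x :=
  (hasDerivAt_mul_const (F x)).congr_of_eventuallyEq ((eventually_gt_nhds one_pos).mono hF)

lemma HasRadialDerivAt.hasDerivAt_smul {t : ℝ} (ht : t ≠ 0) (h : HasRadialDerivAt F F' (t • x)) :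
    HasDerivAt (fun s : ℝ => F (s • x)) (t⁻¹ * F') t := by
  have hscale : HasDerivAt (fun s : ℝ => t⁻¹ * s) t⁻¹ t := by
    simpa only [mul_one] using (hasDerivAt_id' t).const_mul t⁻¹
  have hcomp := HasDerivAt.comp t (by rwa [inv_mul_cancel₀ ht]) hscale
  simpa only [Function.comp_def, smul_smul, mul_right_comm _ _ t, inv_mul_cancel₀ ht, one_mul,
    mul_comm F'] using hcomp

end Module

variable {V : Type*} [NormedAddCommGroup V] [InnerProductSpace ℝ V]

lemma hasRadialDerivAt_abs_inner (α x : V) :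
    HasRadialDerivAt (fun x => |⟪α, x⟫|) |⟪α, x⟫| x :=
  hasRadialDerivAt_of_homogeneous fun t ht => by
    rw [real_inner_smul_right, abs_mul, abs_of_pos ht]

lemma hasRadialDerivAt_ramp_inner (A : ℝ) (α x : V) :
    HasRadialDerivAt (fun x => ramp A ⟪α, x⟫) (A * max ⟪α, x⟫ 0) x := by
  have hmax : HasRadialDerivAt (fun x => max ⟪α, x⟫ 0) (max ⟪α, x⟫ 0) x :=
    hasRadialDerivAt_of_homogeneous fun t ht => by
      rw [real_inner_smul_right, mul_max_of_nonneg _ _ ht.le, mul_zero]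
  exact (HasDerivAt.const_mul A hmax).const_add 1

end RadialDerivative

section Reflection

variable {V : Type*} [NormedAddCommGroup V] [InnerProductSpace ℝ V]

lemma rRefl_eq (α x : V) : rRefl α x = x - (2 * ⟪α, x⟫ / ⟪α, α⟫) • α := by
  simp only [rRefl, coroot, real_inner_smul_left]
  congr 2
  ring

lemma rRefl_eq_reflection (α x : V) : rRefl α x = (ℝ ∙ α)ᗮ.reflection x := by
  rw [Submodule.reflection_orthogonal_apply, Submodule.reflection_singleton_apply, rRefl_eq,
    real_inner_self_eq_norm_sq, two_smul, ← add_smul, neg_sub]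
  simp only [RCLike.ofReal_real_eq_id, id]
  congr 2
  ring

lemma rRefl_rRefl (α x : V) : rRefl α (rRefl α x) = x := by
  simp only [rRefl_eq_reflection, Submodule.reflection_reflection]

lemma rRefl_self (α : V) : rRefl α α = -α := by
  rw [rRefl_eq_reflection, Submodule.reflection_orthogonalComplement_singleton_eq_neg]

lemma rRefl_smul (α : V) (t : ℝ) (x : V) : rRefl α (t • x) = t • rRefl α x := by
  simp only [rRefl_eq_reflection, map_smul]

lemma rRefl_neg (α x : V) : rRefl α (-x) = -rRefl α x := by
  simp only [rRefl_eq_reflection, map_neg]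

lemma rRefl_smul_left {c : ℝ} (hc : c ≠ 0) (α x : V) : rRefl (c • α) x = rRefl α x := by
  simp only [rRefl_eq_reflection, Submodule.span_singleton_smul_eq hc.isUnit]

lemma inner_rRefl_left (α η x : V) : ⟪rRefl α η, x⟫ = ⟪η, rRefl α x⟫ := by
  simp only [rRefl_eq_reflection, LinearIsometryEquiv.inner_map_eq_flip,
    Submodule.reflection_symm]

lemma inner_self_rRefl (α x : V) : ⟪α, rRefl α x⟫ = -⟪α, x⟫ := by
  rw [← inner_rRefl_left, rRefl_self, inner_neg_left]

lemma inner_rRefl (α η x : V) :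
    ⟪η, rRefl α x⟫ = ⟪η, x⟫ - 2 * ⟪α, η⟫ / ⟪α, α⟫ * ⟪α, x⟫ := by
  rw [rRefl_eq, inner_sub_right, real_inner_smul_right, real_inner_comm η α]
  ring

lemma inner_coroot_smul_self {α : V} (hα : α ≠ 0) (c : ℝ) : ⟪coroot α, c • α⟫ = 2 * c := by
  have h := (inner_self_ne_zero (𝕜 := ℝ)).2 hα
  rw [coroot, real_inner_smul_left, real_inner_smul_right]
  field_simp

end Reflection

section PositiveCone

lemma exists_irredundant_span_eq (S : Type*) {M : Type*} [Semiring S] [AddCommMonoid M]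
    [Module S M] (T : Finset M) :
    ∃ B ⊆ T, Submodule.span S (B : Set M) = Submodule.span S T ∧
      ∀ v ∈ B, v ∉ Submodule.span S (B.erase v : Set M) := by
  induction T using Finset.strongInduction with
  | H T ih =>
    by_cases h : ∀ v ∈ T, v ∉ Submodule.span S (T.erase v : Set M)
    · exact ⟨T, subset_rfl, rfl, h⟩
    · push Not at h
      obtain ⟨v, hv, hspan⟩ := h
      obtain ⟨B, hB, hBspan, hirr⟩ := ih _ (Finset.erase_ssubset hv)
      refine ⟨B, hB.trans (Finset.erase_subset v T), ?_, hirr⟩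
      rw [hBspan, ← Submodule.span_insert_eq_span hspan, ← Finset.coe_insert,
        Finset.insert_erase hv]

variable {V : Type*} [NormedAddCommGroup V] [InnerProductSpace ℝ V]

lemma eq_zero_or_inner_pos_of_mem_span {S : Set V} {u : V} (hS : ∀ v ∈ S, 0 < ⟪v, u⟫) {v : V}
    (hv : v ∈ Submodule.span ℝ≥0 S) : v = 0 ∨ 0 < ⟪v, u⟫ := by
  induction hv using Submodule.span_induction with
  | mem v hv => exact Or.inr (hS v hv)
  | zero => exact Or.inl rfl
  | add v w _ _ hv hw =>
    rcases hv with rfl | hv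
    · simpa only [zero_add] using hw
    · rcases hw with rfl | hw
      · simpa only [add_zero] using Or.inr hv
      · exact Or.inr (by rw [inner_add_left]; positivity)
  | smul c v _ hv =>
    rcases hv with rfl | hv
    · exact Or.inl (smul_zero c)
    · rcases eq_or_ne c 0 with rfl | hc
      · exact Or.inl (zero_smul _ v)
      · refine Or.inr ?_
        rw [NNReal.smul_def, real_inner_smul_left]
        exact mul_pos (NNReal.coe_pos.2 (pos_iff_ne_zero.2 hc)) hv

lemma eq_zero_of_add_eq_smul_of_notMem_span {S : Set V} {u v : V} (hS : ∀ w ∈ S, 0 < ⟪w, u⟫)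
    (hvu : 0 < ⟪v, u⟫) (hv : v ∉ Submodule.span ℝ≥0 S) {p q : V} (hp : p ∈ Submodule.span ℝ≥0 S)
    (hq : q ∈ Submodule.span ℝ≥0 S) {r : ℝ} (hpq : p + q = r • v) : p = 0 := by
  have hr : r ≤ 0 := by
    by_contra! hr
    have hv_eq : v = r⁻¹.toNNReal • (p + q) := by
      rw [hpq, NNReal.smul_def, Real.coe_toNNReal _ (inv_pos.2 hr).le, inv_smul_smul₀ hr.ne']
    exact hv (hv_eq ▸ Submodule.smul_mem _ _ (Submodule.add_mem _ hp hq))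
  refine (eq_zero_or_inner_pos_of_mem_span hS hp).resolve_right fun hpu => ?_
  have hqu : 0 ≤ ⟪q, u⟫ := by
    rcases eq_zero_or_inner_pos_of_mem_span hS hq with rfl | h
    exacts [(inner_zero_left u).ge, h.le]
  have hsum : ⟪p, u⟫ + ⟪q, u⟫ = r * ⟪v, u⟫ := by
    rw [← inner_add_left, hpq, real_inner_smul_left]
  nlinarith

end PositiveCone

namespace HOData

section Roots

variable {V : Type*} [NormedAddCommGroup V] [InnerProductSpace ℝ V] (D : HOData V)

lemma k_neg {α : V} (hα : α ∈ D.R) : D.k (-α) = D.k α := by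
  rw [← D.k_inv α hα α hα, rRefl_self]

lemma exists_inner_pos_of_mem_Rpos : ∃ u : V, ∀ α ∈ D.Rpos, 0 < ⟪α, u⟫ := by
  obtain ⟨u, hu⟩ := D.pos_char
  exact ⟨u, fun α hα => (hu α (D.pos_subset hα)).1 hα⟩

lemma neg_notMem_Rpos {α : V} (hα : α ∈ D.Rpos) : -α ∉ D.Rpos := by
  obtain ⟨u, hu⟩ := D.exists_inner_pos_of_mem_Rpos
  intro hneg
  have := hu _ hneg
  rw [inner_neg_left] at this
  linarith [hu α hα]

lemma sum_R_eq_two_mul_sum_Rpos {f : V → ℝ} (hf : ∀ α ∈ D.R, f (-α) = f α) :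
    ∑ α ∈ D.R, f α = 2 * ∑ α ∈ D.Rpos, f α := by
  rw [← Finset.sum_sdiff D.pos_subset, two_mul]
  congr 1
  refine Finset.sum_nbij' (fun α => -α) (fun α => -α) (fun α hα => ?_) (fun α hα => ?_)
    (by simp) (by simp) fun α hα => (hf α (Finset.mem_sdiff.1 hα).1).symm
  · obtain ⟨hR, hpos⟩ := Finset.mem_sdiff.1 hα
    exact (D.pos_or_neg α hR).resolve_left hpos
  · exact Finset.mem_sdiff.2 ⟨D.neg_mem _ (D.pos_subset hα), D.neg_notMem_Rpos hα⟩

lemma sum_R_comp_rRefl {α : V} (hα : α ∈ D.R) (f : V → ℝ) :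
    ∑ β ∈ D.R, f (rRefl α β) = ∑ β ∈ D.R, f β :=
  Finset.sum_nbij' (rRefl α) (rRefl α) (D.refl_mem α hα) (D.refl_mem α hα)
    (fun β _ => rRefl_rRefl α β) (fun β _ => rRefl_rRefl α β) fun _ _ => rfl

variable {D}

lemma mem_Rpos_of_mem_Rpos0 {α : V} (hα : α ∈ Rpos0 D) : α ∈ D.Rpos :=
  (Finset.mem_filter.1 hα).1

lemma mem_R_of_mem_Rpos0 {α : V} (hα : α ∈ Rpos0 D) : α ∈ D.R :=
  D.pos_subset (mem_Rpos_of_mem_Rpos0 hα)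

lemma rRefl_mem_Rpos0 {α η : V} (hα : α ∈ D.R) (hη : η ∈ Rpos0 D) (h : rRefl α η ∈ D.Rpos) :
    rRefl α η ∈ Rpos0 D := by
  refine Finset.mem_filter.2 ⟨h, fun hhalf => (Finset.mem_filter.1 hη).2 ?_⟩
  rw [← rRefl_smul] at hhalf
  simpa only [rRefl_rRefl] using D.refl_mem α hα _ hhalf

lemma neg_rRefl_mem_Rpos0 {α η : V} (hα : α ∈ D.R) (hη : η ∈ Rpos0 D) (h : rRefl α η ∉ D.Rpos) :
    -rRefl α η ∈ Rpos0 D := by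
  refine Finset.mem_filter.2 ⟨(D.pos_or_neg _ (D.refl_mem α hα η (mem_R_of_mem_Rpos0 hη))
    ).resolve_left h, fun hhalf => (Finset.mem_filter.1 hη).2 ?_⟩
  rw [← rRefl_neg, ← rRefl_smul, smul_neg, rRefl_neg] at hhalf
  simpa only [neg_neg, rRefl_rRefl] using D.refl_mem α hα _ (D.neg_mem _ hhalf)

lemma inv_two_smul_mem_Rpos {α : V} (hα : α ∈ D.Rpos) (h : (2 : ℝ)⁻¹ • α ∈ D.R) :
    (2 : ℝ)⁻¹ • α ∈ D.Rpos := by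
  obtain ⟨u, hu⟩ := D.exists_inner_pos_of_mem_Rpos
  refine (D.pos_or_neg _ h).resolve_right fun hneg => ?_
  have := hu _ hneg
  rw [inner_neg_left, real_inner_smul_left] at this
  linarith [hu α hα]

lemma quarter_smul_notMem_R {α : V} (hα : α ∈ D.R) : (2 : ℝ)⁻¹ • (2 : ℝ)⁻¹ • α ∉ D.R := by
  intro h
  obtain ⟨n, hn⟩ := D.integral α hα _ h
  rw [smul_smul, inner_coroot_smul_self (D.root_ne_zero α hα)] at hn
  have : (1 : ℤ) = 2 * n := by
    have : (1 : ℝ) = 2 * n := by linarith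
    exact_mod_cast this
  lia

lemma exists_eq_or_eq_two_smul {α : V} (hα : α ∈ D.Rpos) :
    ∃ β ∈ Rpos0 D, α = β ∨ α = (2 : ℝ) • β := by
  by_cases h : (2 : ℝ)⁻¹ • α ∈ D.R
  · refine ⟨(2 : ℝ)⁻¹ • α, Finset.mem_filter.2 ⟨inv_two_smul_mem_Rpos hα h,
      quarter_smul_notMem_R (D.pos_subset hα)⟩, Or.inr ?_⟩
    rw [smul_inv_smul₀ two_ne_zero]
  · exact ⟨α, Finset.mem_filter.2 ⟨hα, h⟩, Or.inl rfl⟩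

lemma eq_half_or_one_or_two_of_smul_mem {α : V} (hα : α ∈ D.R) {b : ℝ} (hb : 0 < b)
    (h : b • α ∈ D.R) : b = 2⁻¹ ∨ b = 1 ∨ b = 2 := by
  -- `n = 2b` and `m = 2/b` are positive integers with product `4`.
  obtain ⟨n, hn⟩ := D.integral α hα _ h
  obtain ⟨m, hm⟩ := D.integral _ h α hα
  rw [inner_coroot_smul_self (D.root_ne_zero α hα)] at hn
  have hcoroot := inner_coroot_smul_self (D.root_ne_zero _ h) b⁻¹
  rw [inv_smul_smul₀ hb.ne', hm] at hcoroot
  have hn0 : 0 < n := by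
    have : (0 : ℝ) < n := by linarith
    exact_mod_cast this
  have hm0 : 0 < m := by
    have : (0 : ℝ) < m := by rw [hcoroot]; positivity
    exact_mod_cast this
  have hnm : n * m = 4 := by
    have : (n * m : ℝ) = 4 := by rw [← hn, hcoroot]; field_simp; norm_num
    exact_mod_cast this
  have hn4 : n ≤ 4 := by nlinarith
  interval_cases n
  · left; push_cast at hn; linarith
  · right; left; push_cast at hn; linarith
  · lia
  · right; right; push_cast at hn; linarith

lemma eq_of_mem_Rpos0_of_eq_smul {α η : V} (hα : α ∈ Rpos0 D) (hη : η ∈ Rpos0 D) {b : ℝ}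
    (h : η = b • α) : η = α := by
  obtain ⟨u, hu⟩ := D.exists_inner_pos_of_mem_Rpos
  have hb : 0 < b := by
    have hηu := hu η (mem_Rpos_of_mem_Rpos0 hη)
    rw [h, real_inner_smul_left] at hηu
    exact pos_of_mul_pos_left hηu (hu α (mem_Rpos_of_mem_Rpos0 hα)).le
  rcases eq_half_or_one_or_two_of_smul_mem (mem_R_of_mem_Rpos0 hα) hb
    (h ▸ mem_R_of_mem_Rpos0 hη) with rfl | rfl | rfl
  · exact absurd (h ▸ mem_R_of_mem_Rpos0 hη) (Finset.mem_filter.1 hα).2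
  · rw [h, one_smul]
  · refine absurd ?_ (Finset.mem_filter.1 hη).2
    rw [h, inv_smul_smul₀ two_ne_zero]
    exact mem_R_of_mem_Rpos0 hα

end Roots

section SimpleRoots

variable {V : Type*} [NormedAddCommGroup V] [InnerProductSpace ℝ V] {D : HOData V}

/-- The simple roots, characterized as the indivisible positive roots whose reflection permutes the
other indivisible positive roots. -/
def simpleRoots (D : HOData V) : Finset V :=
  {α ∈ Rpos0 D | ∀ η ∈ Rpos0 D, η ≠ α → rRefl α η ∈ D.Rpos}

lemma mem_Rpos0_of_mem_simpleRoots {α : V} (hα : α ∈ D.simpleRoots) : α ∈ Rpos0 D :=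
  (Finset.mem_filter.1 hα).1

lemma rRefl_mem_Rpos_of_mem_simpleRoots {α η : V} (hα : α ∈ D.simpleRoots) (hη : η ∈ Rpos0 D)
    (hne : η ≠ α) : rRefl α η ∈ D.Rpos :=
  (Finset.mem_filter.1 hα).2 η hη hne

lemma mem_simpleRoots_of_irredundant {B : Finset V} (hB : B ⊆ Rpos0 D)
    (hspan : Submodule.span ℝ≥0 (B : Set V) = Submodule.span ℝ≥0 (Rpos0 D)) {α : V} (hα : α ∈ B)
    (hirr : α ∉ Submodule.span ℝ≥0 (B.erase α : Set V)) : α ∈ D.simpleRoots := by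
  refine Finset.mem_filter.2 ⟨hB hα, fun η hη hne => ?_⟩
  by_contra hneg
  have hexpand : ∀ v ∈ Rpos0 D, ∃ b : ℝ≥0, ∃ p ∈ Submodule.span ℝ≥0 (B.erase α : Set V),
      v = b • α + p := fun v hv => by
    rw [← Submodule.mem_span_insert, ← Finset.coe_insert, Finset.insert_erase hα, hspan]
    exact Submodule.subset_span hv
  obtain ⟨b, p, hp, hηeq⟩ := hexpand η hη
  obtain ⟨b', p', hp', hrefl⟩ :=
    hexpand _ (neg_rRefl_mem_Rpos0 (mem_R_of_mem_Rpos0 (hB hα)) hη hneg)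
  have hadd : p + p' = (⟪coroot α, η⟫ - b - b') • α := by
    have hp_eq : p = η - (b : ℝ) • α := by rw [hηeq]; simp [NNReal.smul_def]
    have hp'_eq : p' = -rRefl α η - (b' : ℝ) • α := by rw [hrefl]; simp [NNReal.smul_def]
    rw [hp_eq, hp'_eq, rRefl]
    module
  obtain ⟨u, hu⟩ := D.exists_inner_pos_of_mem_Rpos
  have hB_pos : ∀ v ∈ B, 0 < ⟪v, u⟫ := fun v hv => hu v (mem_Rpos_of_mem_Rpos0 (hB hv))
  have hp_zero : p = 0 := eq_zero_of_add_eq_smul_of_notMem_span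
    (fun v hv => hB_pos v (Finset.mem_of_mem_erase hv)) (hB_pos α hα) hirr hp hp' hadd
  refine hne (eq_of_mem_Rpos0_of_eq_smul (hB hα) hη (b := b) ?_)
  rw [hηeq, hp_zero, add_zero, NNReal.smul_def]

variable (D) in
lemma Rpos0_subset_span_simpleRoots :
    (Rpos0 D : Set V) ⊆ Submodule.span ℝ≥0 (D.simpleRoots : Set V) := by
  obtain ⟨B, hB, hspan, hirr⟩ := exists_irredundant_span_eq ℝ≥0 (Rpos0 D)
  have hsub : (B : Set V) ⊆ D.simpleRoots := fun α hα =>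
    mem_simpleRoots_of_irredundant hB hspan hα (hirr α hα)
  exact Submodule.subset_span.trans (hspan ▸ Submodule.span_mono hsub)

end SimpleRoots

section WeylGroup

variable {V : Type*} [NormedAddCommGroup V] [InnerProductSpace ℝ V] (D : HOData V)

variable {D} in
lemma exists_weylGroup_eq_rRefl {α : V} (hα : α ∈ D.R) :
    ∃ w : weylGroup D, ∀ x, w.1 x = rRefl α x :=
  ⟨⟨(ℝ ∙ α)ᗮ.reflection, Subgroup.subset_closure ⟨α, hα, fun x => (rRefl_eq_reflection α x).symm⟩⟩,
    fun x => (rRefl_eq_reflection α x).symm⟩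

lemma weylGroup_induction {P : (V ≃ₗᵢ[ℝ] V) → Prop} (one : P 1)
    (rRefl_comp : ∀ α ∈ D.R, ∀ w v : V ≃ₗᵢ[ℝ] V, (∀ x, v x = rRefl α (w x)) → P w → P v)
    (w : weylGroup D) : P w := by
  obtain ⟨w, hw⟩ := w
  induction hw using Subgroup.closure_induction_left with
  | one => exact one
  | mul_left r hr w _ hw =>
    obtain ⟨α, hα, hr⟩ := hr
    exact rRefl_comp α hα w _ (fun x => hr (w x)) hw
  | inv_mul_cancel r hr w _ hw =>
    obtain ⟨α, hα, hr⟩ := hr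
    refine rRefl_comp α hα w _ (fun x => r.injective ?_) hw
    change r (r⁻¹ (w x)) = _
    rw [hr (rRefl _ _), rRefl_rRefl]
    exact r.apply_symm_apply (w x)

lemma apply_weylGroup_eq {β : Type*} {f : V → β} (hf : ∀ α ∈ D.R, ∀ x, f (rRefl α x) = f x)
    (w : weylGroup D) (x : V) : f (w.1 x) = f x :=
  D.weylGroup_induction (P := fun w => f (w x) = f x) rfl
    (fun α hα _ _ hv hw => by rw [hv, hf α hα, hw]) w

lemma apply_weylGroup_mem_R (w : weylGroup D) : ∀ α ∈ D.R, w.1 α ∈ D.R :=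
  D.weylGroup_induction (P := fun w => ∀ α ∈ D.R, w α ∈ D.R) (fun _ hα => hα)
    (fun β hβ _ _ hv hw α hα => hv α ▸ D.refl_mem β hβ _ (hw α hα)) w

lemma sub_apply_weylGroup_mem_span (w : weylGroup D) (x : V) :
    x - w.1 x ∈ Submodule.span ℝ (D.R : Set V) := by
  refine D.weylGroup_induction (P := fun w => x - w x ∈ Submodule.span ℝ (D.R : Set V))
    (by simp) (fun α hα _ _ hv hw => ?_) w
  rw [hv, rRefl, sub_sub_eq_add_sub, add_sub_right_comm]
  exact Submodule.add_mem _ hw (Submodule.smul_mem _ _ (Submodule.subset_span hα))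

variable {D} in
lemma eq_one_of_forall_mem_R {w : weylGroup D} (hw : ∀ α ∈ D.R, w.1 α = α) : w = 1 := by
  refine Subtype.ext (LinearIsometryEquiv.ext fun x => ?_)
  have horth : ∀ v ∈ Submodule.span ℝ (D.R : Set V), ⟪x - w.1 x, v⟫ = 0 := fun v hv => by
    induction hv using Submodule.span_induction with
    | mem α hα =>
      rw [inner_sub_left]
      nth_rw 2 [← hw α hα]
      rw [LinearIsometryEquiv.inner_map_map, sub_self]
    | zero => exact inner_zero_right _
    | add v v' _ _ hv hv' => rw [inner_add_right, hv, hv', add_zero]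
    | smul c v _ hv => rw [real_inner_smul_right, hv, mul_zero]
  have hzero := inner_self_eq_zero.1 (horth _ (D.sub_apply_weylGroup_mem_span w x))
  exact (sub_eq_zero.1 hzero).symm

instance finite_weylGroup : Finite (weylGroup D) := by
  let perm (w : weylGroup D) (α : D.R) : D.R := ⟨w.1 α, D.apply_weylGroup_mem_R w α α.2⟩
  refine Finite.of_injective perm fun w v hwv => ?_
  refine inv_mul_eq_one.1 (eq_one_of_forall_mem_R fun α hα => ?_)
  have heq : w.1 α = v.1 α := congrArg Subtype.val (congrFun hwv ⟨α, hα⟩)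
  exact w.1.symm_apply_eq.2 heq.symm

end WeylGroup

section Regular

variable {V : Type*} [NormedAddCommGroup V] [InnerProductSpace ℝ V] {D : HOData V}

lemma horegular_rRefl {α : V} (hα : α ∈ D.R) {x : V} (hx : HORegular D x) :
    HORegular D (rRefl α x) := fun β hβ => by
  rw [← inner_rRefl_left]
  exact hx _ (D.refl_mem α hα β hβ)

lemma horegular_weylGroup_apply (w : weylGroup D) {x : V} (hx : HORegular D x) :
    HORegular D (w.1 x) :=
  D.weylGroup_induction (P := fun w => HORegular D (w x)) hx
    (fun _ hα _ _ hv hw => hv x ▸ horegular_rRefl hα hw) w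

lemma horegular_smul {t : ℝ} (ht : t ≠ 0) {x : V} (hx : HORegular D x) :
    HORegular D (t • x) := fun α hα => by
  rw [real_inner_smul_right]
  exact mul_ne_zero ht (hx α hα)

variable (D)

lemma exists_horegular : ∃ u : V, HORegular D u := by
  obtain ⟨u, hu⟩ := D.exists_inner_pos_of_mem_Rpos
  refine ⟨u, fun α hα => ?_⟩
  rcases D.pos_or_neg α hα with h | h
  · exact (hu α h).ne'
  · have := hu _ h
    rw [inner_neg_left] at this
    linarith

lemma dense_horegular : Dense {x | HORegular D x} := fun x => by
  obtain ⟨u, hu⟩ := D.exists_horegular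
  have hlim : Filter.Tendsto (fun ε : ℝ => x + ε • u) (nhdsWithin 0 {0}ᶜ) (nhds x) := by
    have : Continuous fun ε : ℝ => x + ε • u := by fun_prop
    simpa using (this.tendsto 0).mono_left nhdsWithin_le_nhds
  refine mem_closure_of_tendsto hlim ?_
  simp only [HORegular, Set.mem_ofPred_eq, Filter.eventually_all_finset]
  intro α hα
  rcases eq_or_ne ⟪α, x⟫ 0 with h | h
  · filter_upwards [self_mem_nhdsWithin] with ε hε
    rw [inner_add_right, h, zero_add, real_inner_smul_right]
    exact mul_ne_zero hε (hu α hα)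
  · have hcont : Continuous fun y : V => ⟪α, y⟫ := by fun_prop
    exact ((hcont.tendsto x).comp hlim).eventually_ne h

end Regular

section PosProd

variable {V : Type*} [NormedAddCommGroup V] [InnerProductSpace ℝ V] (D : HOData V)

/-- The product `∏ (1 + A ⟪α, x⟫⁺)` over the indivisible positive roots. -/
def posProd (A : ℝ) (x : V) : ℝ := ∏ α ∈ Rpos0 D, ramp A ⟪α, x⟫

lemma posProd_one_eq_prod_filter (x : V) :
    D.posProd 1 x = ∏ α ∈ (Rpos0 D).filter (fun α => 0 ≤ ⟪α, x⟫), (1 + ⟪α, x⟫) := by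
  rw [posProd, Finset.prod_filter]
  refine Finset.prod_congr rfl fun α _ => ?_
  split_ifs with h
  · rw [ramp_of_nonneg h, one_mul]
  · exact ramp_of_nonpos (not_le.1 h).le

lemma posProd_zero_right (A : ℝ) : D.posProd A 0 = 1 :=
  Finset.prod_eq_one fun α _ => by rw [inner_zero_right, ramp_zero_right]

lemma continuous_posProd (A : ℝ) : Continuous (D.posProd A) :=
  continuous_finsetProd _ fun α _ => (continuous_ramp A).comp (by fun_prop)

variable {A : ℝ}

lemma posProd_pos (hA : 0 ≤ A) (x : V) : 0 < D.posProd A x :=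
  Finset.prod_pos fun α _ => ramp_pos hA ⟪α, x⟫

lemma posProd_le_pow_mul_posProd (hA : 0 ≤ A) {A' : ℝ} (hA' : 0 < A') (x : V) :
    D.posProd A x ≤ max 1 (A / A') ^ (Rpos0 D).card * D.posProd A' x := by
  rw [posProd, posProd, ← Finset.prod_const, ← Finset.prod_mul_distrib]
  exact Finset.prod_le_prod (fun α _ => (ramp_pos hA _).le) fun α _ => ramp_le_max_mul_ramp hA' _

/-- The positive roots which `r_α` keeps positive are permuted by it, so their factors cancel. -/
lemma posProd_rRefl_mul_prod {α : V} (hα : α ∈ D.R) (A : ℝ) (x : V) :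
    D.posProd A (rRefl α x) * ∏ η ∈ Rpos0 D with rRefl α η ∉ D.Rpos, ramp A ⟪η, x⟫ =
      D.posProd A x * ∏ η ∈ Rpos0 D with rRefl α η ∉ D.Rpos, ramp A ⟪η, rRefl α x⟫ := by
  have hmem : ∀ η ∈ (Rpos0 D).filter (fun η => rRefl α η ∈ D.Rpos),
      rRefl α η ∈ (Rpos0 D).filter (fun η => rRefl α η ∈ D.Rpos) := fun η hη => by
    obtain ⟨hη, hpos⟩ := Finset.mem_filter.1 hη
    refine Finset.mem_filter.2 ⟨rRefl_mem_Rpos0 hα hη hpos, ?_⟩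
    rw [rRefl_rRefl]
    exact mem_Rpos_of_mem_Rpos0 hη
  have hpermute : ∏ η ∈ Rpos0 D with rRefl α η ∈ D.Rpos, ramp A ⟪η, rRefl α x⟫ =
      ∏ η ∈ Rpos0 D with rRefl α η ∈ D.Rpos, ramp A ⟪η, x⟫ :=
    Finset.prod_nbij' (rRefl α) (rRefl α) hmem hmem (fun η _ => rRefl_rRefl α η)
      (fun η _ => rRefl_rRefl α η) fun η _ => by rw [inner_rRefl_left]
  rw [posProd, posProd,
    ← Finset.prod_filter_mul_prod_filter_not (Rpos0 D) (fun η => rRefl α η ∈ D.Rpos), hpermute,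
    ← Finset.prod_filter_mul_prod_filter_not (Rpos0 D) (fun η => rRefl α η ∈ D.Rpos)]
  ring

variable {D}

lemma inner_rRefl_le_of_rRefl_notMem {α η x : V} (hα : α ∈ D.Rpos) (hη : η ∈ D.Rpos)
    (h : rRefl α η ∉ D.Rpos) (hx : 0 ≤ ⟪α, x⟫) : ⟪η, rRefl α x⟫ ≤ ⟪η, x⟫ := by
  obtain ⟨u, hu⟩ := D.pos_char
  have hηu := (hu η (D.pos_subset hη)).1 hη
  have hαu := (hu α (D.pos_subset hα)).1 hα
  rw [hu _ (D.refl_mem α (D.pos_subset hα) η (D.pos_subset hη)), not_lt, inner_rRefl_left,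
    inner_rRefl] at h
  have hc : 0 ≤ 2 * ⟪α, η⟫ / ⟪α, α⟫ := (pos_of_mul_pos_left (by linarith) hαu.le).le
  rw [inner_rRefl]
  linarith [mul_nonneg hc hx]

lemma posProd_rRefl_mul_ramp_le (hA : 0 ≤ A) {α : V} (hα : α ∈ Rpos0 D) {x : V}
    (hx : 0 ≤ ⟪α, x⟫) : D.posProd A (rRefl α x) * ramp A ⟪α, x⟫ ≤ D.posProd A x := by
  have hpos := mem_Rpos_of_mem_Rpos0 hα
  set N := (Rpos0 D).filter (fun η => rRefl α η ∉ D.Rpos)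
  have hαN : α ∈ N :=
    Finset.mem_filter.2 ⟨hα, by rw [rRefl_self]; exact D.neg_notMem_Rpos hpos⟩
  have hprod : 0 < ∏ η ∈ N.erase α, ramp A ⟪η, x⟫ := Finset.prod_pos fun η _ => ramp_pos hA _
  have hle : ∏ η ∈ N, ramp A ⟪η, rRefl α x⟫ ≤ ∏ η ∈ N.erase α, ramp A ⟪η, x⟫ := by
    rw [← Finset.mul_prod_erase _ _ hαN, inner_self_rRefl, ramp_of_nonpos (neg_nonpos.2 hx),
      one_mul]
    refine Finset.prod_le_prod (fun η _ => (ramp_pos hA _).le) fun η hη => monotone_ramp hA ?_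
    obtain ⟨hη, hneg⟩ := Finset.mem_filter.1 (Finset.mem_of_mem_erase hη)
    exact inner_rRefl_le_of_rRefl_notMem hpos (mem_Rpos_of_mem_Rpos0 hη) hneg hx
  have heq := D.posProd_rRefl_mul_prod (D.pos_subset hpos) A x
  rw [← Finset.mul_prod_erase _ (fun η => ramp A ⟪η, x⟫) hαN, ← mul_assoc] at heq
  refine le_of_mul_le_mul_right (heq.trans_le ?_) hprod
  exact mul_le_mul_of_nonneg_left hle (D.posProd_pos hA x).le

lemma posProd_rRefl_mul_ramp_of_mem_simpleRoots {α : V} (hα : α ∈ D.simpleRoots) {x : V}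
    (hx : 0 ≤ ⟪α, x⟫) : D.posProd A (rRefl α x) * ramp A ⟪α, x⟫ = D.posProd A x := by
  have hα0 := mem_Rpos0_of_mem_simpleRoots hα
  have hpos := mem_Rpos_of_mem_Rpos0 hα0
  have hfilter : (Rpos0 D).filter (fun η => rRefl α η ∉ D.Rpos) = {α} := by
    refine Finset.eq_singleton_iff_unique_mem.2 ⟨Finset.mem_filter.2 ⟨hα0, ?_⟩, fun η hη => ?_⟩
    · rw [rRefl_self]
      exact D.neg_notMem_Rpos hpos
    · obtain ⟨hη, hneg⟩ := Finset.mem_filter.1 hη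
      by_contra hne
      exact hneg (rRefl_mem_Rpos_of_mem_simpleRoots hα hη hne)
  have heq := D.posProd_rRefl_mul_prod (D.pos_subset hpos) A x
  rwa [hfilter, Finset.prod_singleton, Finset.prod_singleton, inner_self_rRefl,
    ramp_of_nonpos (neg_nonpos.2 hx), mul_one] at heq

variable (D)

lemma exists_posProd_rRefl_le_pow_mul (hA : 0 ≤ A) :
    ∃ c : ℝ, ∀ α ∈ D.R, ∀ x,
      D.posProd A (rRefl α x) ≤ (1 + c * |⟪α, x⟫|) ^ (Rpos0 D).card * D.posProd A x := by
  obtain ⟨M, hM⟩ := ((D.R ×ˢ Rpos0 D).image fun p => |2 * ⟪p.1, p.2⟫ / ⟪p.1, p.1⟫|).exists_le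
  refine ⟨A * M, fun α hα x => ?_⟩
  rw [posProd, posProd, ← Finset.prod_const, ← Finset.prod_mul_distrib]
  refine Finset.prod_le_prod (fun η _ => (ramp_pos hA _).le) fun η hη => ?_
  have hcoeff : |2 * ⟪α, η⟫ / ⟪α, α⟫| ≤ M :=
    hM _ (Finset.mem_image_of_mem _ (Finset.mk_mem_product hα hη))
  rw [inner_rRefl, sub_eq_add_neg]
  refine (ramp_add_le hA _ _).trans (mul_le_mul_of_nonneg_right ?_ (ramp_pos hA _).le)
  rw [abs_neg, abs_mul, mul_assoc A M]
  gcongr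

end PosProd

section RadialOperator

variable {V : Type*} [NormedAddCommGroup V] [InnerProductSpace ℝ V] (D : HOData V)

/-- The right-hand side of the equation of the Opdam function in the radial direction `ξ = x`. -/
def radialOp (F : V → ℝ) (x : V) : ℝ :=
  ∑ α ∈ D.Rpos, D.k α * ⟪α, x⟫ / (1 - Real.exp (-⟪α, x⟫)) * (F (rRefl α x) - F x) +
    ⟪rhoHO D, x⟫ * F x

/-- The Weyl invariant function which equals `⟪ρ, x⟫` on the closed positive chamber. -/
def rootNorm (x : V) : ℝ := 4⁻¹ * ∑ α ∈ D.R, D.k α * |⟪α, x⟫|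

/-- The part of `radialOp` whose coefficients decay exponentially away from the walls. -/
def decayPart (F : V → ℝ) (x : V) : ℝ :=
  ∑ α ∈ D.Rpos, D.k α * bernoulliQuotient |⟪α, x⟫| * (F (rRefl α x) - F x)

/-- The part of `radialOp` whose coefficients grow linearly away from the walls. -/
def jumpPart (F : V → ℝ) (x : V) : ℝ :=
  ∑ α ∈ D.Rpos, D.k α * max ⟪α, x⟫ 0 * F (rRefl α x)

lemma rootNorm_eq_sum_Rpos (x : V) :
    D.rootNorm x = 2⁻¹ * ∑ α ∈ D.Rpos, D.k α * |⟪α, x⟫| := by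
  rw [rootNorm, D.sum_R_eq_two_mul_sum_Rpos fun α hα => by
    rw [D.k_neg hα, inner_neg_left, abs_neg]]
  ring

lemma inner_rhoHO (x : V) : ⟪rhoHO D, x⟫ = 2⁻¹ * ∑ α ∈ D.Rpos, D.k α * ⟪α, x⟫ := by
  simp only [rhoHO, real_inner_smul_left, sum_inner]

lemma inner_rhoHO_eq_sub_rootNorm (x : V) :
    ⟪rhoHO D, x⟫ = ∑ α ∈ D.Rpos, D.k α * max ⟪α, x⟫ 0 - D.rootNorm x := by
  rw [inner_rhoHO, rootNorm_eq_sum_Rpos, Finset.mul_sum, Finset.mul_sum,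
    ← Finset.sum_sub_distrib]
  refine Finset.sum_congr rfl fun α _ => ?_
  rw [← max_zero_add_max_neg_zero_eq_abs_self ⟪α, x⟫]
  nth_rw 1 [← max_zero_sub_max_neg_zero_eq_self ⟪α, x⟫]
  ring

lemma radialOp_eq (F : V → ℝ) (x : V) :
    D.radialOp F x = D.decayPart F x + D.jumpPart F x - D.rootNorm x * F x := by
  rw [radialOp, inner_rhoHO_eq_sub_rootNorm, decayPart, jumpPart, sub_mul, Finset.sum_mul,
    ← add_sub_assoc, ← Finset.sum_add_distrib, ← Finset.sum_add_distrib]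
  congr 1
  refine Finset.sum_congr rfl fun α _ => ?_
  rw [mul_div_assoc, div_one_sub_exp_neg]
  ring

lemma rootNorm_rRefl {α : V} (hα : α ∈ D.R) (x : V) :
    D.rootNorm (rRefl α x) = D.rootNorm x := by
  rw [rootNorm, rootNorm, ← D.sum_R_comp_rRefl hα fun β => D.k β * |⟪β, x⟫|]
  congr 1
  refine Finset.sum_congr rfl fun β hβ => ?_
  rw [D.k_inv α hα β hβ, inner_rRefl_left]

lemma rootNorm_eq_inner_rhoHO {x : V} (hx : x ∈ closure (posChamber D)) :
    D.rootNorm x = ⟪rhoHO D, x⟫ := by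
  rw [rootNorm_eq_sum_Rpos, inner_rhoHO]
  congr 1
  refine Finset.sum_congr rfl fun α hα => ?_
  have hclosed : IsClosed {x : V | 0 ≤ ⟪α, x⟫} := isClosed_le continuous_const (by fun_prop)
  have hnonneg : 0 ≤ ⟪α, x⟫ := closure_minimal (fun y hy => (hy α hα).le) hclosed hx
  rw [abs_of_nonneg hnonneg]

lemma radialOp_sub (F H : V → ℝ) (x : V) :
    D.radialOp (fun y => F y - H y) x = D.radialOp F x - D.radialOp H x := by
  simp only [radialOp, add_sub_add_comm, ← Finset.sum_sub_distrib]
  congr 1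
  · exact Finset.sum_congr rfl fun α _ => by ring
  · ring

lemma radialOp_const_mul (c : ℝ) (F : V → ℝ) (x : V) :
    D.radialOp (fun y => c * F y) x = c * D.radialOp F x := by
  simp only [radialOp, mul_add, Finset.mul_sum]
  congr 1
  · exact Finset.sum_congr rfl fun α _ => by ring
  · ring

lemma radialOp_mul_of_rRefl_invariant {g : V → ℝ} (hg : ∀ α ∈ D.R, ∀ x, g (rRefl α x) = g x)
    (F : V → ℝ) (x : V) : D.radialOp (fun y => g y * F y) x = g x * D.radialOp F x := by
  simp only [radialOp, mul_add, Finset.mul_sum]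
  congr 1
  · refine Finset.sum_congr rfl fun α hα => ?_
    rw [hg α (D.pos_subset hα)]
    ring
  · ring

lemma jumpPart_nonneg {F : V → ℝ} (x : V) (hF : ∀ α ∈ D.R, 0 ≤ F (rRefl α x)) :
    0 ≤ D.jumpPart F x :=
  Finset.sum_nonneg fun α hα => by
    have := D.k_pos α (D.pos_subset hα)
    have := hF α (D.pos_subset hα)
    positivity

lemma neg_sum_mul_le_decayPart {F : V → ℝ} {x : V} (hx : 0 ≤ F x)
    (hF : ∀ α ∈ D.R, 0 ≤ F (rRefl α x)) :
    -((∑ α ∈ D.Rpos, D.k α) * F x) ≤ D.decayPart F x := by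
  rw [decayPart, Finset.sum_mul, ← Finset.sum_neg_distrib]
  refine Finset.sum_le_sum fun α hα => ?_
  have hk := (D.k_pos α (D.pos_subset hα)).le
  have hb := bernoulliQuotient_nonneg (abs_nonneg ⟪α, x⟫)
  calc -(D.k α * F x) ≤ -(D.k α * bernoulliQuotient |⟪α, x⟫| * F x) := by
        have := bernoulliQuotient_le_one (abs_nonneg ⟪α, x⟫)
        rw [neg_le_neg_iff]
        gcongr
        exact mul_le_of_le_one_right hk this
    _ ≤ D.k α * bernoulliQuotient |⟪α, x⟫| * (F (rRefl α x) - F x) := by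
        rw [mul_sub, ← zero_sub]
        gcongr
        exact mul_nonneg (mul_nonneg hk hb) (hF α (D.pos_subset hα))

lemma neg_mul_le_radialOp {F : V → ℝ} {x : V} (hx : 0 ≤ F x)
    (hF : ∀ α ∈ D.R, 0 ≤ F (rRefl α x)) :
    -((∑ α ∈ D.Rpos, D.k α + D.rootNorm x) * F x) ≤ D.radialOp F x := by
  rw [radialOp_eq]
  linarith [D.jumpPart_nonneg x hF, D.neg_sum_mul_le_decayPart hx hF]

end RadialOperator

section PosProdEstimates

variable {V : Type*} [NormedAddCommGroup V] [InnerProductSpace ℝ V] (D : HOData V)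

/-- The sum of the saturations of the indivisible positive roots; `A` times it is the radial
logarithmic derivative of `posProd`. -/
def saturationSum (A : ℝ) (x : V) : ℝ := ∑ α ∈ Rpos0 D, saturation A ⟪α, x⟫

/-- A bounded Weyl invariant function whose radial derivative dominates `decayPart`. -/
def damping (x : V) : ℝ := ∑ α ∈ D.R, |⟪α, x⟫| / (1 + |⟪α, x⟫|)

/-- The radial derivative of `damping`. -/
def dampingDeriv (x : V) : ℝ := ∑ α ∈ D.R, |⟪α, x⟫| / (1 + |⟪α, x⟫|) ^ 2

lemma damping_rRefl {α : V} (hα : α ∈ D.R) (x : V) : D.damping (rRefl α x) = D.damping x := by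
  rw [damping, damping, ← D.sum_R_comp_rRefl hα fun β => |⟪β, x⟫| / (1 + |⟪β, x⟫|)]
  simp only [inner_rRefl_left]

lemma damping_zero : D.damping 0 = 0 :=
  Finset.sum_eq_zero fun α _ => by rw [inner_zero_right, abs_zero, zero_div]

lemma damping_nonneg (x : V) : 0 ≤ D.damping x := Finset.sum_nonneg fun α _ => by positivity

lemma damping_le_card (x : V) : D.damping x ≤ D.R.card := by
  rw [damping, Finset.card_eq_sum_ones, Nat.cast_sum]
  refine Finset.sum_le_sum fun α _ => ?_
  rw [Nat.cast_one]
  exact div_le_one_of_le₀ (by linarith) (by positivity)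

lemma continuous_damping : Continuous D.damping := by
  refine continuous_finsetSum _ fun α _ => Continuous.div (by fun_prop) (by fun_prop) fun x => ?_
  positivity

variable {D} {A : ℝ}

lemma saturation_le_saturationSum (hA : 0 ≤ A) {α : V} (hα : α ∈ Rpos0 D) (x : V) :
    saturation A ⟪α, x⟫ ≤ D.saturationSum A x :=
  Finset.single_le_sum (f := fun α => saturation A ⟪α, x⟫) (fun _ _ => saturation_nonneg hA _) hα

variable (D)

lemma exists_bernoulliQuotient_mul_abs_sub_le (hA : 0 ≤ A) :
    ∃ K : ℝ, 0 ≤ K ∧ ∀ α ∈ D.R, ∀ x,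
      bernoulliQuotient |⟪α, x⟫| * |D.posProd A (rRefl α x) - D.posProd A x| ≤
        K * (|⟪α, x⟫| / (1 + |⟪α, x⟫|) ^ 2) * D.posProd A x := by
  obtain ⟨c, hgrowth⟩ := D.exists_posProd_rRefl_le_pow_mul hA
  obtain ⟨K, hK, hbernoulli⟩ := exists_bernoulliQuotient_mul_le c (Rpos0 D).card
  refine ⟨K, hK, fun α hα x => ?_⟩
  have hpos := D.posProd_pos hA x
  have hpos_refl := D.posProd_pos hA (rRefl α x)
  have hup := hgrowth α hα x
  have hlow := hgrowth α hα (rRefl α x)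
  rw [rRefl_rRefl, inner_self_rRefl, abs_neg] at hlow
  have hb := hbernoulli _ (abs_nonneg ⟪α, x⟫)
  set q := (1 + c * |⟪α, x⟫|) ^ (Rpos0 D).card
  have hdiff : |D.posProd A (rRefl α x) - D.posProd A x| ≤ (q - 1) * D.posProd A x := by
    refine abs_sub_le_iff.2 ⟨by linarith, ?_⟩
    rcases le_total (D.posProd A x) (D.posProd A (rRefl α x)) with h | h
    · linarith
    · have hq : 1 ≤ q := (le_mul_iff_one_le_left hpos_refl).1 (h.trans hlow)
      linarith [mul_le_mul_of_nonneg_left h (sub_nonneg.2 hq)]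
  calc bernoulliQuotient |⟪α, x⟫| * |D.posProd A (rRefl α x) - D.posProd A x|
      ≤ bernoulliQuotient |⟪α, x⟫| * ((q - 1) * D.posProd A x) :=
        mul_le_mul_of_nonneg_left hdiff (bernoulliQuotient_nonneg (abs_nonneg _))
    _ = bernoulliQuotient |⟪α, x⟫| * (q - 1) * D.posProd A x := by ring
    _ ≤ K * (|⟪α, x⟫| / (1 + |⟪α, x⟫|) ^ 2) * D.posProd A x :=
        mul_le_mul_of_nonneg_right hb hpos.le

lemma exists_abs_decayPart_posProd_le (hA : 0 ≤ A) :
    ∃ K : ℝ, ∀ x, |D.decayPart (D.posProd A) x| ≤ K * D.dampingDeriv x * D.posProd A x := by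
  obtain ⟨K, hK, hbound⟩ := D.exists_bernoulliQuotient_mul_abs_sub_le hA
  refine ⟨(∑ α ∈ D.Rpos, D.k α) * K, fun x => ?_⟩
  have hpos := D.posProd_pos hA x
  rw [mul_assoc, mul_assoc, Finset.sum_mul]
  refine (Finset.abs_sum_le_sum_abs _ _).trans (Finset.sum_le_sum fun α hα => ?_)
  have hαR := D.pos_subset hα
  have hk := (D.k_pos α hαR).le
  have hb := bernoulliQuotient_nonneg (abs_nonneg ⟪α, x⟫)
  have hsingle : |⟪α, x⟫| / (1 + |⟪α, x⟫|) ^ 2 ≤ D.dampingDeriv x :=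
    Finset.single_le_sum (f := fun α => |⟪α, x⟫| / (1 + |⟪α, x⟫|) ^ 2)
      (fun _ _ => by positivity) hαR
  rw [abs_mul, abs_mul, abs_of_nonneg hk, abs_of_nonneg hb, mul_assoc]
  refine mul_le_mul_of_nonneg_left ((hbound α hαR x).trans ?_) hk
  rw [← mul_assoc]
  gcongr

lemma max_inner_mul_posProd_rRefl_le (hA : 0 ≤ A) {α : V} (hα : α ∈ D.Rpos) (x : V) :
    max ⟪α, x⟫ 0 * D.posProd A (rRefl α x) ≤ 2 * (D.saturationSum A x * D.posProd A x) := by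
  obtain ⟨β, hβ, hαβ⟩ := exists_eq_or_eq_two_smul hα
  have hrefl : rRefl α x = rRefl β x := by
    rcases hαβ with rfl | rfl
    exacts [rfl, rRefl_smul_left two_ne_zero β x]
  have hmax : max ⟪α, x⟫ 0 ≤ 2 * max ⟪β, x⟫ 0 := by
    have := le_max_right ⟪β, x⟫ 0
    have := le_max_left ⟪β, x⟫ 0
    refine max_le ?_ (by linarith)
    rcases hαβ with rfl | rfl
    · linarith
    · rw [real_inner_smul_left]
      linarith
  have hβ_le : max ⟪β, x⟫ 0 * D.posProd A (rRefl β x) ≤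
      D.saturationSum A x * D.posProd A x := by
    refine le_trans ?_ (mul_le_mul_of_nonneg_right (saturation_le_saturationSum hA hβ x)
      (D.posProd_pos hA x).le)
    rcases le_total ⟪β, x⟫ 0 with hneg | hnonneg
    · rw [max_eq_right hneg, saturation_of_nonpos hneg, zero_mul, zero_mul]
    · rw [← saturation_mul_ramp hA, mul_assoc, mul_comm (ramp A _)]
      exact mul_le_mul_of_nonneg_left (posProd_rRefl_mul_ramp_le hA hβ hnonneg)
        (saturation_nonneg hA _)
  have := mul_le_mul_of_nonneg_right hmax (D.posProd_pos hA (rRefl β x)).le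
  rw [hrefl]
  linarith

lemma jumpPart_posProd_le (hA : 0 ≤ A) (x : V) :
    D.jumpPart (D.posProd A) x ≤
      2 * (∑ α ∈ D.Rpos, D.k α) * D.saturationSum A x * D.posProd A x := by
  rw [mul_assoc, mul_comm 2, mul_assoc, Finset.sum_mul]
  refine Finset.sum_le_sum fun α hα => ?_
  rw [mul_assoc]
  exact mul_le_mul_of_nonneg_left (D.max_inner_mul_posProd_rRefl_le hA hα x)
    (D.k_pos α (D.pos_subset hα)).le

lemma sum_simpleRoots_mul_posProd_le_jumpPart (hA : 0 ≤ A) (x : V) :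
    (∑ α ∈ D.simpleRoots, D.k α * saturation A ⟪α, x⟫) * D.posProd A x ≤
      D.jumpPart (D.posProd A) x := by
  rw [Finset.sum_mul]
  refine (Finset.sum_le_sum fun α hα => ?_).trans (Finset.sum_le_sum_of_subset_of_nonneg
    (fun α hα => mem_Rpos_of_mem_Rpos0 (mem_Rpos0_of_mem_simpleRoots hα)) fun α hα _ => ?_)
  · rcases le_total ⟪α, x⟫ 0 with hneg | hnonneg
    · rw [max_eq_right hneg, saturation_of_nonpos hneg, mul_zero, zero_mul, zero_mul]
    · rw [← posProd_rRefl_mul_ramp_of_mem_simpleRoots hα hnonneg, ← saturation_mul_ramp hA]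
      exact le_of_eq (by ring)
  · have := D.k_pos α (D.pos_subset hα)
    have := D.posProd_pos hA (rRefl α x)
    positivity

lemma exists_saturation_inner_le_sum_simpleRoots {v : V}
    (hv : v ∈ Submodule.span ℝ≥0 (D.simpleRoots : Set V)) :
    ∃ M : ℝ, 0 ≤ M ∧ ∀ A : ℝ, 0 ≤ A → ∀ x : V,
      saturation A ⟪v, x⟫ ≤ M * ∑ α ∈ D.simpleRoots, D.k α * saturation A ⟪α, x⟫ := by
  have hk : ∀ α ∈ D.simpleRoots, 0 < D.k α := fun α hα =>
    D.k_pos α (mem_R_of_mem_Rpos0 (mem_Rpos0_of_mem_simpleRoots hα))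
  induction hv using Submodule.span_induction with
  | mem α hα =>
    refine ⟨(D.k α)⁻¹, (inv_pos.2 (hk α hα)).le, fun A hA x => ?_⟩
    rw [le_inv_mul_iff₀ (hk α hα)]
    exact Finset.single_le_sum (f := fun α => D.k α * saturation A ⟪α, x⟫)
      (fun β hβ => mul_nonneg (hk β hβ).le (saturation_nonneg hA _)) hα
  | zero =>
    exact ⟨0, le_rfl, fun A _ x => by rw [inner_zero_left, saturation_of_nonpos le_rfl, zero_mul]⟩
  | add v w _ _ hv hw =>
    obtain ⟨M, hM, hv⟩ := hv
    obtain ⟨N, hN, hw⟩ := hw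
    refine ⟨M + N, add_nonneg hM hN, fun A hA x => ?_⟩
    rw [inner_add_left, add_mul]
    exact (saturation_add_le hA _ _).trans (add_le_add (hv A hA x) (hw A hA x))
  | smul c v _ hv =>
    obtain ⟨M, hM, hv⟩ := hv
    have hc : (0 : ℝ) ≤ 1 + c := by positivity
    refine ⟨(1 + c) * M, mul_nonneg hc hM, fun A hA x => ?_⟩
    rw [NNReal.smul_def, real_inner_smul_left, mul_assoc]
    exact (saturation_mul_le hA c.2 _).trans (mul_le_mul_of_nonneg_left (hv A hA x) hc)

lemma exists_mul_saturationSum_le_sum_simpleRoots :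
    ∃ c : ℝ, 0 < c ∧ ∀ A : ℝ, 0 ≤ A → ∀ x : V,
      c * D.saturationSum A x ≤ ∑ α ∈ D.simpleRoots, D.k α * saturation A ⟪α, x⟫ := by
  choose! M hM hbound using fun (α : V) (hα : α ∈ Rpos0 D) =>
    D.exists_saturation_inner_le_sum_simpleRoots (D.Rpos0_subset_span_simpleRoots hα)
  have hsum : 0 ≤ ∑ α ∈ Rpos0 D, M α := Finset.sum_nonneg hM
  refine ⟨(1 + ∑ α ∈ Rpos0 D, M α)⁻¹, by positivity, fun A hA x => ?_⟩
  have hsimple : 0 ≤ ∑ α ∈ D.simpleRoots, D.k α * saturation A ⟪α, x⟫ :=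
    Finset.sum_nonneg fun α hα => mul_nonneg
      (D.k_pos α (mem_R_of_mem_Rpos0 (mem_Rpos0_of_mem_simpleRoots hα))).le (saturation_nonneg hA _)
  rw [inv_mul_le_iff₀ (by positivity)]
  calc D.saturationSum A x
      ≤ ∑ α ∈ Rpos0 D, M α * ∑ β ∈ D.simpleRoots, D.k β * saturation A ⟪β, x⟫ :=
        Finset.sum_le_sum fun α hα => hbound α hα A hA x
    _ = (∑ α ∈ Rpos0 D, M α) * ∑ β ∈ D.simpleRoots, D.k β * saturation A ⟪β, x⟫ :=
        (Finset.sum_mul _ _ _).symm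
    _ ≤ (1 + ∑ α ∈ Rpos0 D, M α) * ∑ β ∈ D.simpleRoots, D.k β * saturation A ⟪β, x⟫ := by
        gcongr
        linarith

lemma exists_mul_saturationSum_mul_posProd_le_jumpPart :
    ∃ c : ℝ, 0 < c ∧ ∀ A : ℝ, 0 ≤ A → ∀ x : V,
      c * D.saturationSum A x * D.posProd A x ≤ D.jumpPart (D.posProd A) x := by
  obtain ⟨c, hc, hbound⟩ := D.exists_mul_saturationSum_le_sum_simpleRoots
  exact ⟨c, hc, fun A hA x => (mul_le_mul_of_nonneg_right (hbound A hA x)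
    (D.posProd_pos hA x).le).trans (D.sum_simpleRoots_mul_posProd_le_jumpPart hA x)⟩

end PosProdEstimates

section RadialDerivative

variable {V : Type*} [NormedAddCommGroup V] [InnerProductSpace ℝ V] (D : HOData V)

lemma hasRadialDerivAt_rootNorm (x : V) : HasRadialDerivAt D.rootNorm (D.rootNorm x) x :=
  (HasDerivAt.fun_sum fun α _ =>
    (hasRadialDerivAt_abs_inner α x).const_mul (D.k α)).const_mul 4⁻¹

lemma hasRadialDerivAt_damping (x : V) : HasRadialDerivAt D.damping (D.dampingDeriv x) x := by
  refine HasDerivAt.fun_sum fun α _ => ?_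
  have habs := hasRadialDerivAt_abs_inner α x
  have hquot := HasDerivAt.fun_div habs (habs.const_add 1) (by positivity)
  refine hquot.congr_deriv ?_
  simp only [one_smul]
  ring

variable {A : ℝ}

lemma hasRadialDerivAt_posProd (hA : 0 ≤ A) (x : V) :
    HasRadialDerivAt (D.posProd A) (A * D.saturationSum A x * D.posProd A x) x := by
  have hprod : HasRadialDerivAt (D.posProd A) _ x :=
    HasDerivAt.fun_finsetProd fun α _ => hasRadialDerivAt_ramp_inner A α x
  refine hprod.congr_deriv ?_
  rw [saturationSum, Finset.mul_sum, Finset.sum_mul]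
  refine Finset.sum_congr rfl fun α hα => ?_
  rw [posProd, ← Finset.prod_erase_mul _ _ hα, ← saturation_mul_ramp hA, smul_eq_mul]
  simp only [one_smul]
  ring

end RadialDerivative

section Barrier

variable {V : Type*} [NormedAddCommGroup V] [InnerProductSpace ℝ V] (D : HOData V)

/-- The comparison functions; `barrier D 1 0` is the function of the theorem, and all barriers
with `0 < A` are comparable to it. -/
def barrier (A B : ℝ) (x : V) : ℝ := Real.exp (B * D.damping x - D.rootNorm x) * D.posProd A x

lemma barrier_zero_right (A B : ℝ) : D.barrier A B 0 = 1 := by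
  have hnorm : D.rootNorm 0 = 0 := by
    simp only [rootNorm, inner_zero_right, abs_zero, mul_zero, Finset.sum_const_zero]
  rw [barrier, damping_zero, hnorm, posProd_zero_right, mul_zero, sub_zero, Real.exp_zero, one_mul]

lemma continuous_rootNorm : Continuous D.rootNorm := by unfold rootNorm; fun_prop

lemma continuous_barrier (A B : ℝ) : Continuous (D.barrier A B) :=
  (Real.continuous_exp.comp ((D.continuous_damping.const_mul B).sub
    D.continuous_rootNorm)).mul (D.continuous_posProd A)

lemma rootNorm_weylGroup_apply (w : weylGroup D) (x : V) : D.rootNorm (w.1 x) = D.rootNorm x :=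
  D.apply_weylGroup_eq (fun _ hα => D.rootNorm_rRefl hα) w x

lemma barrier_one_zero_eq {x : V} {w : weylGroup D} (hx : w.1 x ∈ closure (posChamber D)) :
    D.barrier 1 0 x = (∏ α ∈ (Rpos0 D).filter (fun α => 0 ≤ ⟪α, x⟫), (1 + ⟪α, x⟫)) *
      Real.exp (-⟪rhoHO D, w.1 x⟫) := by
  rw [barrier, posProd_one_eq_prod_filter, ← D.rootNorm_weylGroup_apply w,
    D.rootNorm_eq_inner_rhoHO hx, zero_mul, zero_sub, mul_comm]

variable {A B : ℝ}

lemma exists_barrier_le_mul_barrier {A' : ℝ} (hA : 0 ≤ A) (hA' : 0 < A') (B B' : ℝ) :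
    ∃ C : ℝ, 0 < C ∧ ∀ x, D.barrier A B x ≤ C * D.barrier A' B' x := by
  refine ⟨Real.exp (|B - B'| * D.R.card) * max 1 (A / A') ^ (Rpos0 D).card, by positivity,
    fun x => ?_⟩
  have hexponent : B * D.damping x - D.rootNorm x ≤
      |B - B'| * D.R.card + (B' * D.damping x - D.rootNorm x) := by
    have := mul_le_mul_of_nonneg_right (le_abs_self (B - B')) (D.damping_nonneg x)
    have := mul_le_mul_of_nonneg_left (D.damping_le_card x) (abs_nonneg (B - B'))
    linarith
  calc D.barrier A B x
      ≤ Real.exp (|B - B'| * D.R.card + (B' * D.damping x - D.rootNorm x)) *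
          (max 1 (A / A') ^ (Rpos0 D).card * D.posProd A' x) :=
        mul_le_mul (Real.exp_le_exp.2 hexponent) (D.posProd_le_pow_mul_posProd hA hA' x)
          (D.posProd_pos hA x).le (Real.exp_pos _).le
    _ = Real.exp (|B - B'| * D.R.card) * max 1 (A / A') ^ (Rpos0 D).card * D.barrier A' B' x := by
        rw [Real.exp_add, barrier]
        ring

lemma hasRadialDerivAt_barrier (hA : 0 ≤ A) (x : V) :
    HasRadialDerivAt (D.barrier A B)
      (Real.exp (B * D.damping x - D.rootNorm x) *
        ((B * D.dampingDeriv x + A * D.saturationSum A x - D.rootNorm x) * D.posProd A x)) x := by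
  have hexp := ((D.hasRadialDerivAt_damping x).const_mul B |>.fun_sub
    (D.hasRadialDerivAt_rootNorm x)).exp
  have hbarrier := hexp.fun_mul (D.hasRadialDerivAt_posProd hA x)
  refine hbarrier.congr_deriv ?_
  simp only [one_smul]
  ring

lemma radialOp_barrier (x : V) :
    D.radialOp (D.barrier A B) x = Real.exp (B * D.damping x - D.rootNorm x) *
      (D.decayPart (D.posProd A) x + D.jumpPart (D.posProd A) x -
        D.rootNorm x * D.posProd A x) := by
  rw [← radialOp_eq]
  exact D.radialOp_mul_of_rRefl_invariant
    (fun α hα x => by rw [D.damping_rRefl hα, D.rootNorm_rRefl hα]) (D.posProd A) x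

end Barrier

section Comparison

variable {V : Type*} [NormedAddCommGroup V] [InnerProductSpace ℝ V] (D : HOData V)

/-- Continuous functions solving the radial part of the equation of the Opdam function `G₀`. -/
structure IsRadialSolution (F : V → ℝ) : Prop where
  continuous : Continuous F
  hasRadialDerivAt : ∀ x, HORegular D x → HasRadialDerivAt F (D.radialOp F x) x

/-- Continuous functions solving the radial equation with `≤` in place of equality. -/
structure IsRadialSubsolution (F : V → ℝ) : Prop where
  continuous : Continuous F
  exists_hasRadialDerivAt_le : ∀ x, HORegular D x →
    ∃ F', HasRadialDerivAt F F' x ∧ F' ≤ D.radialOp F x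

/-- Continuous functions solving the radial equation with `≥` in place of equality. -/
structure IsRadialSupersolution (F : V → ℝ) : Prop where
  continuous : Continuous F
  exists_le_hasRadialDerivAt : ∀ x, HORegular D x →
    ∃ F', HasRadialDerivAt F F' x ∧ D.radialOp F x ≤ F'

variable {D} {F H : V → ℝ}

lemma IsRadialSolution.isRadialSubsolution (h : D.IsRadialSolution F) : D.IsRadialSubsolution F :=
  ⟨h.continuous, fun x hx => ⟨_, h.hasRadialDerivAt x hx, le_rfl⟩⟩

lemma IsRadialSolution.isRadialSupersolution (h : D.IsRadialSolution F) :
    D.IsRadialSupersolution F :=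
  ⟨h.continuous, fun x hx => ⟨_, h.hasRadialDerivAt x hx, le_rfl⟩⟩

lemma IsRadialSubsolution.const_mul (h : D.IsRadialSubsolution F) {c : ℝ} (hc : 0 ≤ c) :
    D.IsRadialSubsolution fun x => c * F x where
  continuous := h.continuous.const_mul c
  exists_hasRadialDerivAt_le x hx := by
    obtain ⟨F', hderiv, hle⟩ := h.exists_hasRadialDerivAt_le x hx
    refine ⟨c * F', HasDerivAt.const_mul c hderiv, ?_⟩
    rw [radialOp_const_mul]
    exact mul_le_mul_of_nonneg_left hle hc

lemma IsRadialSupersolution.const_mul (h : D.IsRadialSupersolution F) {c : ℝ} (hc : 0 ≤ c) :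
    D.IsRadialSupersolution fun x => c * F x where
  continuous := h.continuous.const_mul c
  exists_le_hasRadialDerivAt x hx := by
    obtain ⟨F', hderiv, hle⟩ := h.exists_le_hasRadialDerivAt x hx
    refine ⟨c * F', HasDerivAt.const_mul c hderiv, ?_⟩
    rw [radialOp_const_mul]
    exact mul_le_mul_of_nonneg_left hle hc

lemma IsRadialSupersolution.sub (hH : D.IsRadialSupersolution H) (hF : D.IsRadialSubsolution F) :
    D.IsRadialSupersolution fun x => H x - F x where
  continuous := hH.continuous.sub hF.continuous
  exists_le_hasRadialDerivAt x hx := by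
    obtain ⟨H', hH', hH_le⟩ := hH.exists_le_hasRadialDerivAt x hx
    obtain ⟨F', hF', hF_le⟩ := hF.exists_hasRadialDerivAt_le x hx
    refine ⟨H' - F', HasDerivAt.fun_sub hH' hF', ?_⟩
    rw [radialOp_sub]
    exact sub_le_sub hH_le hF_le

/-- Along a ray, the values of `F` on the Weyl orbit form a cooperative system: the reflected
values enter `radialOp` with nonnegative coefficients. -/
lemma IsRadialSupersolution.pos_of_horegular (hF : D.IsRadialSupersolution F) (h0 : 0 < F 0)
    {x : V} (hx : HORegular D x) : 0 < F x := by
  choose! F' hderiv hle using hF.exists_le_hasRadialDerivAt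
  have hregular : ∀ (w : weylGroup D) (t : ℝ), 0 < t → HORegular D (t • w.1 x) := fun w t ht =>
    horegular_smul ht.ne' (horegular_weylGroup_apply w hx)
  have hpos := pos_of_cooperative (d := fun (w : weylGroup D) t => F (t • w.1 x))
    (d' := fun w t => t⁻¹ * F' (t • w.1 x))
    (c := fun w t => t⁻¹ * (∑ α ∈ D.Rpos, D.k α + D.rootNorm (t • w.1 x)))
    (fun w => hF.continuous.comp (by fun_prop)) (fun w => by rwa [zero_smul])
    (fun w t ht => (hderiv _ (hregular w t ht)).hasDerivAt_smul ht.ne')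
    (fun w => (continuousOn_inv₀.mono fun t ht => ht.ne').mul
      (continuous_const.add (D.continuous_rootNorm.comp (by fun_prop))).continuousOn)
    (fun t ht hnonneg w => ?_) 1 zero_le_one
  · simpa only [one_smul, OneMemClass.coe_one, LinearIsometryEquiv.coe_one, id] using hpos
  have hrefl : ∀ α ∈ D.R, 0 ≤ F (rRefl α (t • w.1 x)) := fun α hα => by
    obtain ⟨v, hv⟩ := exists_weylGroup_eq_rRefl hα
    rw [rRefl_smul, ← hv]
    exact hnonneg (v * w)
  rw [mul_assoc, ← mul_neg]
  exact mul_le_mul_of_nonneg_left ((neg_mul_le_radialOp D (hnonneg w) hrefl).trans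
    (hle _ (hregular w t ht))) (inv_pos.2 ht).le

lemma IsRadialSubsolution.le_of_lt_zero (hF : D.IsRadialSubsolution F)
    (hH : D.IsRadialSupersolution H) (h0 : F 0 < H 0) (x : V) : F x ≤ H x :=
  D.dense_horegular.induction
    (fun _ hx => sub_nonneg.1 ((hH.sub hF).pos_of_horegular (sub_pos.2 h0) hx).le)
    (isClosed_le hF.continuous hH.continuous) x

variable (D)

lemma exists_isRadialSupersolution_barrier :
    ∃ A B : ℝ, 0 ≤ A ∧ D.IsRadialSupersolution (D.barrier A B) := by
  have hA : 0 ≤ 2 * ∑ α ∈ D.Rpos, D.k α :=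
    mul_nonneg zero_le_two (Finset.sum_nonneg fun α hα => (D.k_pos α (D.pos_subset hα)).le)
  obtain ⟨K, hdecay⟩ := D.exists_abs_decayPart_posProd_le hA
  refine ⟨_, K, hA, D.continuous_barrier _ _, fun x _ =>
    ⟨_, D.hasRadialDerivAt_barrier hA x, ?_⟩⟩
  rw [radialOp_barrier]
  refine mul_le_mul_of_nonneg_left ?_ (Real.exp_pos _).le
  linarith [(abs_le.1 (hdecay x)).2, D.jumpPart_posProd_le hA x]

lemma exists_isRadialSubsolution_barrier :
    ∃ A B : ℝ, 0 < A ∧ D.IsRadialSubsolution (D.barrier A B) := by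
  obtain ⟨A, hA, hjump⟩ := D.exists_mul_saturationSum_mul_posProd_le_jumpPart
  obtain ⟨K, hdecay⟩ := D.exists_abs_decayPart_posProd_le hA.le
  refine ⟨A, -K, hA, D.continuous_barrier _ _, fun x _ =>
    ⟨_, D.hasRadialDerivAt_barrier hA.le x, ?_⟩⟩
  rw [radialOp_barrier]
  refine mul_le_mul_of_nonneg_left ?_ (Real.exp_pos _).le
  linarith [(abs_le.1 (hdecay x)).1, hjump A hA.le x]

variable {D}

lemma IsRadialSolution.exists_mul_barrier_le (hF : D.IsRadialSolution F) (h0 : 0 < F 0) :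
    ∃ c : ℝ, 0 < c ∧ ∀ x, c * D.barrier 1 0 x ≤ F x := by
  obtain ⟨A, B, hA, hbarrier⟩ := D.exists_isRadialSubsolution_barrier
  obtain ⟨C, hC, hle⟩ := D.exists_barrier_le_mul_barrier zero_le_one hA 0 B
  refine ⟨F 0 / 2 / C, by positivity, fun x => ?_⟩
  have hstart : F 0 / 2 * D.barrier A B 0 < F 0 := by rw [barrier_zero_right]; linarith
  calc F 0 / 2 / C * D.barrier 1 0 x ≤ F 0 / 2 / C * (C * D.barrier A B x) := by
        gcongr
        exact hle x
    _ = F 0 / 2 * D.barrier A B x := by field_simp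
    _ ≤ F x := (hbarrier.const_mul (half_pos h0).le).le_of_lt_zero hF.isRadialSupersolution hstart x

lemma IsRadialSolution.exists_le_mul_barrier (hF : D.IsRadialSolution F) (h0 : 0 < F 0) :
    ∃ C : ℝ, ∀ x, F x ≤ C * D.barrier 1 0 x := by
  obtain ⟨A, B, hA, hbarrier⟩ := D.exists_isRadialSupersolution_barrier
  obtain ⟨C, -, hle⟩ := D.exists_barrier_le_mul_barrier hA one_pos B 0
  refine ⟨2 * F 0 * C, fun x => ?_⟩
  have hstart : F 0 < 2 * F 0 * D.barrier A B 0 := by rw [barrier_zero_right]; linarith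
  calc F x ≤ 2 * F 0 * D.barrier A B x :=
        hF.isRadialSubsolution.le_of_lt_zero (hbarrier.const_mul (by positivity)) hstart x
    _ ≤ 2 * F 0 * (C * D.barrier 1 0 x) := by
        gcongr
        exact hle x
    _ = 2 * F 0 * C * D.barrier 1 0 x := by ring

end Comparison

end HOData

section Main

variable {V : Type*} [NormedAddCommGroup V] [InnerProductSpace ℝ V] {D : HOData V} {G : V → ℝ}

lemma IsOpdamR.isRadialSolution (hG : IsOpdamR D 0 G) : D.IsRadialSolution G where
  continuous := continuous_iff_continuousAt.2 fun x => (hG.1 x trivial).continuousAt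
  hasRadialDerivAt x hx := by
    have hray : HasDerivAt (fun t : ℝ => t • x) x 1 := by
      simpa only [one_smul] using (hasDerivAt_id' (1 : ℝ)).smul_const x
    have hderiv := (hG.1 ((1 : ℝ) • x) trivial).differentiableAt.hasFDerivAt.comp_hasDerivAt 1 hray
    have heq := hG.2.2 x x hx
    rw [add_zero] at heq
    rwa [one_smul, heq] at hderiv

theorem statement7_general (hG : D.IsRadialSolution G) (h0 : 0 < G 0) :
    ∃ C c : ℝ, 0 < c ∧ c ≤ C ∧ ∀ x : V, ∀ xplus ∈ closure (posChamber D),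
      (∃ w : weylGroup D, w.1 x = xplus) →
      c * ((∏ α ∈ (Rpos0 D).filter (fun α => 0 ≤ ⟪α, x⟫), (1 + ⟪α, x⟫)) *
          Real.exp (-⟪rhoHO D, xplus⟫)) ≤ G x ∧
      G x ≤ C * ((∏ α ∈ (Rpos0 D).filter (fun α => 0 ≤ ⟪α, x⟫), (1 + ⟪α, x⟫)) *
          Real.exp (-⟪rhoHO D, xplus⟫)) := by
  obtain ⟨c, hc, hlower⟩ := hG.exists_mul_barrier_le h0
  obtain ⟨C, hupper⟩ := hG.exists_le_mul_barrier h0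
  have hcC : c ≤ C := by
    have hzero := (hlower 0).trans (hupper 0)
    rwa [D.barrier_zero_right, mul_one, mul_one] at hzero
  refine ⟨C, c, hc, hcC, ?_⟩
  rintro x _ hx ⟨w, rfl⟩
  rw [← D.barrier_one_zero_eq hx]
  exact ⟨hlower x, hupper x⟩

end Main

/-- sharp global estimate of `G₀` on all of `a`:
`G₀(x) ≍ Π_{α ∈ R₀⁺, (α,x) ≥ 0} (1 + (α,x)) · e^{-(ρ, x⁺)}`, where `x⁺` is the unique
point of the Weyl orbit of `x` lying in the closed positive chamber. -/
theorem statement7 (D : HOData E) [Fintype (weylGroup D)] (Gzero : E → ℝ)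
    (hG0 : IsOpdamR D 0 Gzero) :
    ∃ C c : ℝ, 0 < c ∧ c ≤ C ∧ ∀ x : E, ∀ xplus ∈ closure (posChamber D),
      (∃ w : weylGroup D, w.1 x = xplus) →
      c * ((∏ α ∈ (Rpos0 D).filter (fun α => 0 ≤ ⟪α, x⟫), (1 + ⟪α, x⟫)) *
          Real.exp (-⟪rhoHO D, xplus⟫)) ≤ Gzero x ∧
      Gzero x ≤ C * ((∏ α ∈ (Rpos0 D).filter (fun α => 0 ≤ ⟪α, x⟫), (1 + ⟪α, x⟫)) *
          Real.exp (-⟪rhoHO D, xplus⟫)) := by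
  exact statement7_general hG0.isRadialSolution (hG0.2.1 ▸ one_pos)
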